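/- Let M be a symmetric matrix with entries in {0,1,*}, indexed by a finite set D, let S ⊆ D, and let k be an integer with k > |D|. Let ℓ = |{i ∈ S : M_{i,i} = 0}|. Consider the functions σ : {1,…,k} → D whose image is exactly S and which satisfy M_{σ(u),σ(v)} ∈ {1,*} for all distinct u, v ∈ {1,…,k} (these are the S-surjective M-partitions of the complete graph on k vertices). If ℓ = |S|, or there exist distinct i, j ∈ S with M_{i,j} = 0, then there are no such functions. Otherwise, the number of such functions is exactly k⁽ℓ⁾ · (|S|−ℓ)! · S(k−ℓ, |S|−ℓ). -/

import Mathlib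

/-- The three possible entries `0`, `1`, `*` of a matrix-partition matrix. -/
inductive Entry : Type
  | zero | one | star
deriving DecidableEq

/-- Stirling numbers of the second kind: `stirling2 n k` is the number of
partitions of an `n`-element set into `k` nonempty blocks. -/
def stirling2 : ℕ → ℕ → ℕ
  | 0, 0 => 1
  | 0, _ + 1 => 0
  | _ + 1, 0 => 0
  | n + 1, k + 1 => (k + 1) * stirling2 n (k + 1) + stirling2 n k

/-!
If distinct elements of `S` never have the entry `0`, a function `σ` with range `S` is an
`M`-partition of a complete graph exactly when no value `i` with `M i i = 0` is attained twice.
Such a function amounts to an injective choice of one vertex for each of these `ℓ` values, which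
gives the factor `k⁽ℓ⁾`, and a surjection from the other `k - ℓ` vertices onto the remaining
`|S| - ℓ` values. Surjections are counted by the Stirling recurrence: restricting one to all
vertices but the last leaves either a surjection or a function missing exactly the last value.
When `ℓ = |S| < k`, there is no value left for the other vertices, and the formula gives
`S(k - ℓ, 0) = 0`.
-/

section

open Function Set Nat

theorem stirling2_eq_stirlingSecond : ∀ n m, stirling2 n m = stirlingSecond n m
  | 0, 0 => rfl
  | 0, _ + 1 => rfl
  | _ + 1, 0 => rfl
  | n + 1, m + 1 => by
    rw [stirling2, stirlingSecond_succ_succ, stirling2_eq_stirlingSecond n (m + 1),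
      stirling2_eq_stirlingSecond n m]

variable {α β : Type*}

theorem finite_setOf_range_eq [Finite α] {S : Set β} (hS : S.Finite) :
    {f : α → β | range f = S}.Finite :=
  (Set.Finite.pi' fun _ => hS).subset fun _ hf a => hf ▸ mem_range_self a

theorem insert_eq_iff_eq_or_eq_sdiff {b : β} {S T : Set β} :
    insert b T = S ↔ b ∈ S ∧ (T = S ∨ T = S \ {b}) := by
  constructor
  · rintro rfl
    by_cases hb : b ∈ T
    · exact ⟨mem_insert b T, .inl (insert_eq_of_mem hb).symm⟩
    · exact ⟨mem_insert b T, .inr (insert_sdiff_self_of_notMem hb).symm⟩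
  · rintro ⟨hb, rfl | rfl⟩
    · exact insert_eq_of_mem hb
    · rw [insert_sdiff_singleton, insert_eq_of_mem hb]

theorem range_option_eq_iff {f : Option α → β} {S : Set β} :
    range f = S ↔
      f none ∈ S ∧ (range (f ∘ some) = S ∨ range (f ∘ some) = S \ {f none}) := by
  rw [Option.range_eq, insert_eq_iff_eq_or_eq_sdiff]

/-- A function on `Option α` with range `S` is its value at `none` together with a function on `α`
that covers all of `S`, or all of `S` except that value. -/
def rangeEqOptionEquiv (α : Type*) (S : Set β) :
    {f : Option α → β | range f = S} ≃
      Σ b : S, ↥({g : α → β | range g = S} ∪ {g : α → β | range g = S \ {b.1}}) where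
  toFun f :=
    ⟨⟨f.1 none, (range_option_eq_iff.mp f.2).1⟩, f.1 ∘ some, (range_option_eq_iff.mp f.2).2⟩
  invFun p := ⟨fun o => o.elim p.1.1 p.2.1, range_option_eq_iff.mpr ⟨p.1.2, p.2.2⟩⟩
  left_inv f := Subtype.ext (funext fun o => by cases o <;> rfl)
  right_inv _ := rfl

theorem ncard_setOf_range_eq_option [Finite α] {S : Set β} [Fintype S] :
    {f : Option α → β | range f = S}.ncard =
      ∑ b : S, ({g : α → β | range g = S}.ncard + {g : α → β | range g = S \ {b.1}}.ncard) := by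
  have hfin : {g : α → β | range g = S}.Finite := finite_setOf_range_eq S.toFinite
  have hfin' (b : S) : {g : α → β | range g = S \ {b.1}}.Finite :=
    finite_setOf_range_eq S.toFinite.sdiff
  have (b : S) := (hfin.union (hfin' b)).to_subtype
  rw [← Nat.card_coe_set_eq, Nat.card_congr (rangeEqOptionEquiv α S), Nat.card_sigma]
  refine Finset.sum_congr rfl fun b _ => ?_
  have hdisj : Disjoint {g : α → β | range g = S} {g : α → β | range g = S \ {b.1}} :=
    Set.disjoint_left.mpr fun g (hg : range g = S) (hg' : range g = S \ {b.1}) =>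
      (hg' ▸ hg ▸ b.2 : b.1 ∈ S \ {b.1}).2 rfl
  rw [Nat.card_coe_set_eq, ncard_union_eq hdisj hfin (hfin' b)]

theorem ncard_setOf_range_eq [Finite α] {S : Set β} (hS : S.Finite) :
    {f : α → β | range f = S}.ncard = S.ncard ! * stirlingSecond (Nat.card α) S.ncard := by
  induction α using Finite.induction_empty_option generalizing S with
  | of_equiv e ih =>
    rw [← Nat.card_congr e, ← ih hS]
    exact Nat.card_congr ((e.symm.arrowCongr (.refl β)).subtypeEquiv fun f => by
      simp [Equiv.arrowCongr, e.surjective.range_comp])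
  | h_empty =>
    rcases S.eq_empty_or_nonempty with rfl | hne
    · simp [range_eq_empty]
    · obtain ⟨m, hm⟩ := exists_eq_succ_of_ne_zero (hne.ncard_pos hS).ne'
      simp [range_eq_empty, hne.ne_empty.symm, hm]
  | @h_option α _ ih =>
    have := hS.fintype
    have hterm (b : S) :
        {g : α → β | range g = S}.ncard + {g : α → β | range g = S \ {b.1}}.ncard =
          S.ncard ! * stirlingSecond (Nat.card α) S.ncard +
            (S.ncard - 1)! * stirlingSecond (Nat.card α) (S.ncard - 1) := by
      rw [ih hS, ih hS.sdiff, ncard_sdiff_singleton_of_mem b.2]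
    rw [ncard_setOf_range_eq_option, Finset.sum_congr rfl fun b _ => hterm b, Finset.sum_const,
      Finset.card_univ, ← Nat.card_eq_fintype_card, Nat.card_coe_set_eq, Finite.card_option,
      smul_eq_mul]
    cases S.ncard with
    | zero => simp
    | succ m => rw [stirlingSecond_succ_succ, factorial_succ, Nat.add_sub_cancel]; ring

open Classical in
/-- The function on `α` that undoes `e` on the range of `e` and is `g` elsewhere. It rebuilds a
function attaining each value in `A` once from the points `e b` where these values are attained and
its restriction `g` to the other points. -/
noncomputable def extendLeftInverse {A : Set β} (e : A ↪ α) (g : ↥(range e)ᶜ → β) (a : α) : β :=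
  if h : a ∈ range e then h.choose else g ⟨a, h⟩

section ExtendLeftInverse

variable {A B : Set β} {e : A ↪ α}

theorem extendLeftInverse_apply (g : ↥(range e)ᶜ → β) (b : A) :
    extendLeftInverse e g (e b) = b := by
  have h : e b ∈ range e := mem_range_self b
  rw [extendLeftInverse, dif_pos h, e.injective h.choose_spec]

theorem extendLeftInverse_of_notMem (g : ↥(range e)ᶜ → β) (a : ↥(range e)ᶜ) :
    extendLeftInverse e g a = g a :=
  dif_neg a.2

theorem eq_extendLeftInverse {f : α → β} (hf : ∀ b, f (e b) = b) :
    f = extendLeftInverse e ((range e)ᶜ.domRestrict f) := by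
  funext a
  by_cases ha : a ∈ range e
  · obtain ⟨b, rfl⟩ := ha
    rw [hf, extendLeftInverse_apply]
  · exact (extendLeftInverse_of_notMem ((range e)ᶜ.domRestrict f) ⟨a, ha⟩).symm

theorem range_extendLeftInverse (g : ↥(range e)ᶜ → β) :
    range (extendLeftInverse e g) = A ∪ range g := by
  have hA : extendLeftInverse e g '' range e = A := by
    rw [← range_comp, show extendLeftInverse e g ∘ e = Subtype.val from
      funext (extendLeftInverse_apply g), Subtype.range_val]
  have hg : extendLeftInverse e g '' (range e)ᶜ = range g := by
    rw [← range_domRestrict]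
    exact congrArg range (funext (extendLeftInverse_of_notMem g))
  rw [← image_univ, ← union_compl_self (range e), image_union, hA, hg]

theorem extendLeftInverse_eq_coe_iff {g : ↥(range e)ᶜ → β} (h : Disjoint A (range g)) {a : α}
    {b : A} : extendLeftInverse e g a = b ↔ a = e b := by
  constructor
  · intro hab
    by_cases ha : a ∈ range e
    · obtain ⟨b', rfl⟩ := ha
      rw [extendLeftInverse_apply] at hab
      rw [Subtype.ext hab]
    · rw [extendLeftInverse_of_notMem g ⟨a, ha⟩] at hab
      exact (disjoint_left.mp h b.2 ⟨_, hab⟩).elim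
  · rintro rfl
    exact extendLeftInverse_apply g b

theorem injOn_extendLeftInverse {g : ↥(range e)ᶜ → β} (h : Disjoint A (range g)) :
    InjOn (extendLeftInverse e g) (extendLeftInverse e g ⁻¹' A) := fun _ ha _ _ haa' =>
  have h_eq {x : α} := extendLeftInverse_eq_coe_iff h (a := x) (b := ⟨_, ha⟩)
  (h_eq.mp rfl).trans (h_eq.mp haa'.symm).symm

theorem image_compl_range_eq {f : α → β} (hAB : Disjoint A B) (hrange : range f = A ∪ B)
    (hinj : InjOn f (f ⁻¹' A)) (he : ∀ b, f (e b) = b) : f '' (range e)ᶜ = B := by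
  have hpre : range e = f ⁻¹' A := by
    refine Subset.antisymm (range_subset_iff.mpr fun b => ?_) fun a ha => ⟨⟨f a, ha⟩, ?_⟩
    · exact mem_preimage.mpr (by rw [he]; exact b.2)
    · exact hinj (mem_preimage.mpr (by rwa [he])) ha (he _)
  rw [hpre, ← preimage_compl, image_preimage_eq_inter_range, hrange, inter_union_distrib_left,
    compl_inter_self, empty_union, inter_eq_right]
  exact hAB.subset_compl_left

end ExtendLeftInverse

/-- A function with range `A ∪ B` that attains each value in `A` only once is the choice of the
points where these values are attained and a function with range `B` on the remaining points. -/
noncomputable def rangeEqUnionEquiv (α : Type*) {A B : Set β} (hAB : Disjoint A B) :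
    (Σ e : A ↪ α, {g : ↥(range e)ᶜ → β | range g = B}) ≃
      {f : α → β | range f = A ∪ B ∧ InjOn f (f ⁻¹' A)} :=
  .ofBijective
    (fun p => ⟨extendLeftInverse p.1 p.2.1, by rw [range_extendLeftInverse, p.2.2],
      injOn_extendLeftInverse (p.2.2.symm ▸ hAB)⟩) <| by
    constructor
    · rintro ⟨e, g, hg⟩ ⟨e', g', hg'⟩ h
      have hext : extendLeftInverse e g = extendLeftInverse e' g' := congrArg Subtype.val h
      obtain rfl : e = e' := by
        ext b
        rw [← extendLeftInverse_eq_coe_iff (hg'.symm ▸ hAB), ← hext, extendLeftInverse_apply]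
      obtain rfl : g = g' := by
        funext a
        rw [← extendLeftInverse_of_notMem g, hext, extendLeftInverse_of_notMem]
      rfl
    · rintro ⟨f, hrange, hinj⟩
      have hmem (b : A) : ∃ a, f a = b := by
        rw [← mem_range, hrange]
        exact .inl b.2
      choose e he using hmem
      have he_inj : Injective e := fun b b' h => Subtype.ext <| by rw [← he, h, he]
      refine ⟨⟨⟨e, he_inj⟩, (range e)ᶜ.domRestrict f, ?_⟩, ?_⟩
      · exact (range_domRestrict f _).trans
          (image_compl_range_eq (e := ⟨e, he_inj⟩) hAB hrange hinj he)
      · exact Subtype.ext (eq_extendLeftInverse (e := ⟨e, he_inj⟩) he).symm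

theorem ncard_setOf_range_eq_union_injOn [Finite α] {A B : Set β} (hAB : Disjoint A B)
    (hA : A.Finite) (hB : B.Finite) :
    {f : α → β | range f = A ∪ B ∧ InjOn f (f ⁻¹' A)}.ncard =
      (Nat.card α).descFactorial A.ncard *
        (B.ncard ! * stirlingSecond (Nat.card α - A.ncard) B.ncard) := by
  have := hA.to_subtype
  have := Fintype.ofFinite A
  have := Fintype.ofFinite α
  have := Fintype.ofFinite (A ↪ α)
  have hfiber (e : A ↪ α) : Nat.card {g : ↥(range e)ᶜ → β | range g = B} =
      B.ncard ! * stirlingSecond (Nat.card α - A.ncard) B.ncard := by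
    rw [Nat.card_coe_set_eq, ncard_setOf_range_eq hB, Nat.card_coe_set_eq, ncard_compl,
      ncard_range_of_injective e.injective, Nat.card_coe_set_eq]
  have (e : A ↪ α) := (finite_setOf_range_eq (α := ↥(range e)ᶜ) hB).to_subtype
  rw [← Nat.card_coe_set_eq, ← Nat.card_congr (rangeEqUnionEquiv α hAB), Nat.card_sigma,
    Finset.sum_congr rfl fun e _ => hfiber e, Finset.sum_const, Finset.card_univ,
    Fintype.card_embedding_eq, ← Nat.card_eq_fintype_card, ← Nat.card_eq_fintype_card,
    Nat.card_coe_set_eq, smul_eq_mul]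

theorem pairwise_iff_injOn_preimage {r : β → β → Prop} {S : Set β} (hr : S.Pairwise r)
    {f : α → β} (hf : range f = S) :
    (∀ u v, u ≠ v → r (f u) (f v)) ↔ InjOn f (f ⁻¹' (S ∩ {i | ¬ r i i})) := by
  have hS (u : α) : f u ∈ S := hf ▸ mem_range_self u
  constructor
  · intro h u hu v _ huv
    by_contra hne
    have := h u v hne
    rw [← huv] at this
    exact hu.2 this
  · intro h u v hne
    by_cases huv : f u = f v
    · by_contra hruv
      have hv : f v ∈ S ∩ {i | ¬ r i i} := ⟨hS v, by rwa [huv] at hruv⟩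
      have hu : f u ∈ S ∩ {i | ¬ r i i} := by rwa [huv]
      exact hne (h hu hv huv)
    · exact hr (hS u) (hS v) huv

theorem ncard_setOf_range_eq_pairwise [Finite α] {r : β → β → Prop} {S : Set β}
    (hS : S.Finite) (hr : S.Pairwise r) {ℓ : ℕ} (hℓ : ℓ = (S ∩ {i | ¬ r i i}).ncard) :
    {f : α → β | range f = S ∧ ∀ u v, u ≠ v → r (f u) (f v)}.ncard =
      (Nat.card α).descFactorial ℓ * (S.ncard - ℓ)! *
        stirlingSecond (Nat.card α - ℓ) (S.ncard - ℓ) := by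
  set A := S ∩ {i | ¬ r i i}
  have hAS : A ⊆ S := inter_subset_left
  have hset : {f : α → β | range f = S ∧ ∀ u v, u ≠ v → r (f u) (f v)} =
      {f | range f = A ∪ S \ A ∧ InjOn f (f ⁻¹' A)} := by
    ext f
    rw [union_sdiff_cancel hAS]
    exact and_congr_right fun hf => pairwise_iff_injOn_preimage hr hf
  rw [hset, ncard_setOf_range_eq_union_injOn disjoint_sdiff_right (hS.subset hAS) hS.sdiff,
    ncard_sdiff hAS (hS.subset hAS), ← hℓ, mul_assoc]

theorem stmt6_general {D V : Type*} (M : D → D → Entry) {S : Set D} (hS : S.Finite)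
    (hV : S.ncard < Nat.card V) (ℓ : ℕ) (hℓ : ℓ = (S ∩ {i | M i i = Entry.zero}).ncard) :
    ((ℓ = S.ncard ∨ ∃ i ∈ S, ∃ j ∈ S, i ≠ j ∧ M i j = Entry.zero) →
      Nat.card {σ : V → D // range σ = S ∧
        ∀ u v : V, u ≠ v → M (σ u) (σ v) ≠ Entry.zero} = 0) ∧
    (¬ (ℓ = S.ncard ∨ ∃ i ∈ S, ∃ j ∈ S, i ≠ j ∧ M i j = Entry.zero) →
      Nat.card {σ : V → D // range σ = S ∧
        ∀ u v : V, u ≠ v → M (σ u) (σ v) ≠ Entry.zero} =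
      (Nat.card V).descFactorial ℓ * (S.ncard - ℓ)! *
        stirling2 (Nat.card V - ℓ) (S.ncard - ℓ)) := by
  have : Finite V := Nat.finite_of_card_ne_zero (Nat.ne_zero_of_lt hV)
  by_cases hM : ∃ i ∈ S, ∃ j ∈ S, i ≠ j ∧ M i j = Entry.zero
  · refine ⟨fun _ => ?_, fun h => absurd (.inr hM) h⟩
    obtain ⟨_, hi, _, hj, hij, hzero⟩ := hM
    have : IsEmpty {σ : V → D // range σ = S ∧
        ∀ u v : V, u ≠ v → M (σ u) (σ v) ≠ Entry.zero} :=
      ⟨fun ⟨_, hσ, hne⟩ => (hσ ▸ Pairwise.range_pairwise (r := fun i j => M i j ≠ Entry.zero) hne)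
        hi hj hij hzero⟩
    exact Nat.card_of_isEmpty
  · have hr : S.Pairwise fun i j => M i j ≠ Entry.zero :=
      fun i hi j hj hij hzero => hM ⟨i, hi, j, hj, hij, hzero⟩
    have hcount : Nat.card {σ : V → D // range σ = S ∧
        ∀ u v : V, u ≠ v → M (σ u) (σ v) ≠ Entry.zero} = _ :=
      ncard_setOf_range_eq_pairwise hS hr (by simpa only [ne_eq, not_not] using hℓ)
    rw [hcount, ← stirling2_eq_stirlingSecond]
    refine ⟨?_, fun _ => rfl⟩
    rintro (rfl | h)
    · obtain ⟨n, hn⟩ := exists_eq_succ_of_ne_zero (Nat.sub_ne_zero_of_lt hV)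
      rw [Nat.sub_self, hn, stirling2, mul_zero]
    · exact absurd h hM

end

/-- Counting `S`-surjective `M`-partitions of the complete graph on `k > |D|` vertices:
with `ℓ = |{i ∈ S : M i i = 0}|`, if `ℓ = |S|` or some distinct `i,j ∈ S` have
`M i j = 0` there are none; otherwise there are `k⁽ℓ⁾·(|S|−ℓ)!·S(k−ℓ,|S|−ℓ)`. -/
theorem stmt6 {D : Type} [Fintype D] (M : D → D → Entry)
    (hsym : ∀ i j, M i j = M j i) (S : Set D) (k : ℕ) (hk : Fintype.card D < k)
    (ℓ : ℕ) (hℓ : ℓ = (S ∩ {i | M i i = Entry.zero}).ncard) :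
    ((ℓ = S.ncard ∨ ∃ i ∈ S, ∃ j ∈ S, i ≠ j ∧ M i j = Entry.zero) →
      Nat.card {σ : Fin k → D // Set.range σ = S ∧
        ∀ u v : Fin k, u ≠ v → M (σ u) (σ v) ≠ Entry.zero} = 0) ∧
    (¬ (ℓ = S.ncard ∨ ∃ i ∈ S, ∃ j ∈ S, i ≠ j ∧ M i j = Entry.zero) →
      Nat.card {σ : Fin k → D // Set.range σ = S ∧
        ∀ u v : Fin k, u ≠ v → M (σ u) (σ v) ≠ Entry.zero} =
      k.descFactorial ℓ * (S.ncard - ℓ).factorial * stirling2 (k - ℓ) (S.ncard - ℓ)) := by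
  have hS : S.ncard < Nat.card (Fin k) := by
    rw [Nat.card_fin]
    exact (Set.ncard_le_card S).trans_lt (Nat.card_eq_fintype_card (α := D) ▸ hk)
  simpa only [Nat.card_fin] using stmt6_general M S.toFinite hS ℓ hℓ
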